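/- Let log J be an α-Hölder g-function with unique g-measure μ. Then for every α-Hölder a:Ω→ℂ and all fixed x,y∈Ω, lim_{s→1⁺}(s−1)ζ₊(s) = lim_{s→1⁺}(s−1)ζ₋(s); in particular both limits equal (1/h_μ(σ)) ∫_Ω a dμ. -/

import Mathlib

open Real MeasureTheory Filter Topology Set

open scoped Classical

namespace GS

/-- The full shift space `Ω = 𝒜^ℕ`. -/
abbrev Omega (𝒜 : Type) : Type := ℕ → 𝒜

variable {𝒜 : Type}

/-- The left shift `σ(x₁,x₂,…) = (x₂,x₃,…)`. -/
def shift (x : Omega 𝒜) : Omega 𝒜 := fun n => x (n + 1)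

/-- Prepending a symbol: `qx = (q,x₁,x₂,…)`. -/
def cons (q : 𝒜) (x : Omega 𝒜) : Omega 𝒜 := fun n => Nat.casesOn n q x

/-- Concatenation `wx` of a finite word `w ∈ 𝒜^k` with `x ∈ Ω`. -/
def concat {k : ℕ} (w : Fin k → 𝒜) (x : Omega 𝒜) : Omega 𝒜 :=
  fun n => if h : n < k then w ⟨n, h⟩ else x (n - k)

/-- The metric `d(x,y) = 2^{-N(x,y)}`, `N(x,y) = inf{k ≥ 1 : x_k ≠ y_k}`
(sequences are indexed from `0` in Lean, whence the `+ 1`). -/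
noncomputable def dOmega (x y : Omega 𝒜) : ℝ :=
  if x = y then 0 else (1 / 2 : ℝ) ^ (sInf {k : ℕ | x k ≠ y k} + 1)

/-- `a : Ω → E` is `α`-Hölder (w.r.t. `dOmega`):
`Hol_α(a) = sup_{x≠y} ‖a x - a y‖ / d(x,y)^α < ∞`. -/
def IsHolderW (α : ℝ) {E : Type*} [NormedAddCommGroup E] (a : Omega 𝒜 → E) : Prop :=
  ∃ C : ℝ, ∀ x y : Omega 𝒜, ‖a x - a y‖ ≤ C * (dOmega x y) ^ α

/-- The Hölder constant `Hol_α(a) = sup_{x≠y} ‖a x - a y‖ / d(x,y)^α`. -/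
noncomputable def HolConst (α : ℝ) {E : Type*} [NormedAddCommGroup E] (a : Omega 𝒜 → E) : ℝ :=
  sSup {r : ℝ | ∃ x y : Omega 𝒜, x ≠ y ∧ r = ‖a x - a y‖ / (dOmega x y) ^ α}

/-- `J` is a `g`-function: continuous, strictly positive, with `∑_{q∈𝒜} J(qx) = 1`. -/
def IsGFunction [Fintype 𝒜] [TopologicalSpace 𝒜] (J : Omega 𝒜 → ℝ) : Prop :=
  Continuous J ∧ (∀ x, 0 < J x) ∧ ∀ x : Omega 𝒜, ∑ q : 𝒜, J (cons q x) = 1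

/-- The Ruelle transfer operator `(L_f φ)(x) = ∑_{q∈𝒜} e^{f(qx)} φ(qx)`. -/
noncomputable def ruelle [Fintype 𝒜] {E : Type*} [AddCommMonoid E] [Module ℝ E]
    (f : Omega 𝒜 → ℝ) (φ : Omega 𝒜 → E) : Omega 𝒜 → E :=
  fun x => ∑ q : 𝒜, Real.exp (f (cons q x)) • φ (cons q x)

/-- Birkhoff sum `S_k(f) = ∑_{j=0}^{k-1} f ∘ σ^j`. -/
def birkhoff (f : Omega 𝒜 → ℝ) (k : ℕ) (x : Omega 𝒜) : ℝ :=
  ∑ j ∈ Finset.range k, f (shift^[j] x)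

/-- `𝕁(wx) = exp (S_k(log J)(wx))` for a word `w` of length `k`. -/
noncomputable def JBirk (J : Omega 𝒜 → ℝ) (k : ℕ) (w : Fin k → 𝒜) (x : Omega 𝒜) : ℝ :=
  Real.exp (birkhoff (fun z => Real.log (J z)) k (concat w x))

/-- `ζ₊(s) = ∑_{k≥1} ∑_{w∈𝒜^k} a(wx) 𝕁(wx)^s`. -/
noncomputable def zetaPlus [Fintype 𝒜] (J : Omega 𝒜 → ℝ) (a : Omega 𝒜 → ℂ) (x : Omega 𝒜)
    (s : ℝ) : ℂ :=
  ∑' k : ℕ, ∑ w : Fin (k + 1) → 𝒜, a (concat w x) * (((JBirk J (k + 1) w x) ^ s : ℝ) : ℂ)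

/-- `ζ₋(s) = ∑_{k≥1} ∑_{w∈𝒜^k} a(wy) 𝕁(wx)^s`. -/
noncomputable def zetaMinus [Fintype 𝒜] (J : Omega 𝒜 → ℝ) (a : Omega 𝒜 → ℂ) (x y : Omega 𝒜)
    (s : ℝ) : ℂ :=
  ∑' k : ℕ, ∑ w : Fin (k + 1) → 𝒜, a (concat w y) * (((JBirk J (k + 1) w x) ^ s : ℝ) : ℂ)

/-- `L_{log J}^* μ = μ`, i.e. `μ` is a `g`-measure of `J`, tested against continuous functions. -/
def IsGMeasure [Fintype 𝒜] [TopologicalSpace 𝒜] [MeasurableSpace 𝒜]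
    (J : Omega 𝒜 → ℝ) (μ : Measure (Omega 𝒜)) : Prop :=
  IsProbabilityMeasure μ ∧
    ∀ φ : Omega 𝒜 → ℂ, Continuous φ →
      ∫ x, ruelle (fun z => Real.log (J z)) φ x ∂μ = ∫ x, φ x ∂μ

/-- The cylinder set determined by a finite word. -/
def cyl {k : ℕ} (w : Fin k → 𝒜) : Set (Omega 𝒜) := {x | ∀ i : Fin k, x (i : ℕ) = w i}

/-- Entropy of the partition into cylinders of length `n`. -/
noncomputable def blockEntropy [Fintype 𝒜] [MeasurableSpace 𝒜] (μ : Measure (Omega 𝒜))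
    (n : ℕ) : ℝ :=
  ∑ w : Fin n → 𝒜, Real.negMulLog (μ (cyl w)).toReal

/-- Kolmogorov–Sinai entropy `h_μ(σ)` of a shift-invariant measure, computed through the
generating partition into cylinders: `h_μ(σ) = lim_n H_n/n = inf_{n≥1} H_n/n`. -/
noncomputable def KSentropy [Fintype 𝒜] [MeasurableSpace 𝒜] (μ : Measure (Omega 𝒜)) : ℝ :=
  ⨅ n : ℕ, blockEntropy μ (n + 1) / (n + 1)

/-- Topological pressure `P(f) = sup {h_μ(σ) + ∫ f dμ}` over shift-invariant Borel
probability measures. -/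
noncomputable def pressure [Fintype 𝒜] [MeasurableSpace 𝒜] (f : Omega 𝒜 → ℝ) : ℝ :=
  sSup {r : ℝ | ∃ μ : Measure (Omega 𝒜), IsProbabilityMeasure μ ∧
    Measure.map shift μ = μ ∧ r = KSentropy μ + ∫ x, f x ∂μ}

/-- `μ` is an equilibrium state of `f`. -/
def IsEquilibrium [Fintype 𝒜] [MeasurableSpace 𝒜] (f : Omega 𝒜 → ℝ)
    (μ : Measure (Omega 𝒜)) : Prop :=
  IsProbabilityMeasure μ ∧ Measure.map shift μ = μ ∧
    KSentropy μ + ∫ x, f x ∂μ = pressure f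

/-- The Walters class `W(Ω,σ)`:
`sup_{n≥1} sup_{w∈𝒜^n} |S_n(f)(wx) − S_n(f)(wy)| → 0` as `d(x,y) → 0`. -/
def WaltersClass [TopologicalSpace 𝒜] (f : Omega 𝒜 → ℝ) : Prop :=
  Continuous f ∧ ∀ ε > (0:ℝ), ∃ δ > (0:ℝ), ∀ x y : Omega 𝒜, dOmega x y < δ →
    ∀ (n : ℕ) (w : Fin n → 𝒜),
      |birkhoff f n (concat w x) - birkhoff f n (concat w y)| ≤ ε

/-- The set `W*` of finite (nonempty) words over `𝒜`. -/
def Words (𝒜 : Type) : Type := Σ k : ℕ, Fin (k + 1) → 𝒜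

end GS

namespace GS

/-!
Write `g = log J` and let `L s` be the Ruelle operator of the potential `s • g`. Since `g ≤ -c < 0`,
`‖L s‖ ≤ exp (-c (s - 1)) < 1` for `s > 1`, and `ζ₊ s` is the value at `x` of `R s a - a`, where
`R s = ∑ k, L s ^ k = (1 - L s)⁻¹`; moreover `(s - 1) • R s` stays bounded as `s → 1⁺`. No spectral
gap is needed to find its limit:

* `R s (1 - L s) = 1` kills the range of `1 - L 1` in the limit. By bounded distortion the weights
  of a word before two different tails are comparable, so `L 1 ^ n φ` contracts to the constant
  `∫ φ dμ`, and therefore every `φ` of zero mean is in the closure of that range.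
* On constants, `(s - 1)⁻¹ (1 - L s) 1` tends to `-L 1 g`, whose mean is `-∫ g dμ`.

Hence `(s - 1) • R s φ` tends to the constant `∫ φ dμ / ∫ -g dμ`. The denominator is the entropy:
`μ (cyl w)` is the mean of the weight of `w`, so that the entropy of the partition into words of
length `n` differs from `-n ∫ g dμ` by a bounded amount (Jensen below, bounded distortion above).

Finally, `ζ₋ s - ζ₊ s` has coefficients `a (wy) - a (wx)`, which tend to zero uniformly in `w` as
the length of `w` grows, and the Abel means of a null sequence tend to zero.
-/

section NeumannSeries

variable {𝕜 X Y ι : Type*} [NontriviallyNormedField 𝕜] [NormedAddCommGroup X] [NormedSpace 𝕜 X]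
  [NormedAddCommGroup Y] [NormedSpace 𝕜 Y] {l : Filter ι}

lemma tendsto_apply_zero_of_mem_closure {B : ι → X →L[𝕜] Y} {K : ℝ} (hB : ∀ᶠ i in l, ‖B i‖ ≤ K)
    {S : Set X} (hS : ∀ g ∈ S, Tendsto (fun i => B i g) l (𝓝 0)) {f : ι → X} {f₀ : X}
    (hf : Tendsto f l (𝓝 f₀)) (hf₀ : f₀ ∈ closure S) :
    Tendsto (fun i => B i (f i)) l (𝓝 0) := by
  rw [Metric.tendsto_nhds]
  intro ε hε
  obtain ⟨δ, hδ, hKδ⟩ : ∃ δ > 0, K * δ < ε / 2 := by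
    refine ⟨ε / (2 * (|K| + 1)), by positivity, (mul_le_mul_of_nonneg_right (le_abs_self K)
      (by positivity)).trans_lt ?_⟩
    rw [mul_div_assoc', div_lt_div_iff₀ (by positivity) two_pos]
    linarith
  obtain ⟨g, hgS, hg⟩ := Metric.mem_closure_iff.1 hf₀ δ hδ
  filter_upwards [hB, (hf.dist tendsto_const_nhds).eventually_lt_const hg,
    (hS g hgS).norm.eventually_lt_const (norm_zero.trans_lt (half_pos hε))] with i hBi hfi hgi
  rw [dist_zero_right, ← sub_add_cancel (f i) g, map_add]
  have hfg : ‖B i (f i - g)‖ ≤ K * δ :=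
    ((B i).le_opNorm _).trans (mul_le_mul hBi (dist_eq_norm (f i) g ▸ hfi.le) (norm_nonneg _)
      ((norm_nonneg _).trans hBi))
  linarith [norm_add_le (B i (f i - g)) (B i g)]

lemma norm_tsum_pow_le {A : X →L[𝕜] X} (hA : ‖A‖ < 1) : ‖∑' k, A ^ k‖ ≤ (1 - ‖A‖)⁻¹ := by
  have h := tsum_geometric_le_of_norm_lt_one A hA
  have h1 : ‖(1 : X →L[𝕜] X)‖ ≤ 1 := ContinuousLinearMap.norm_id_le
  linarith

variable [CompleteSpace X]

lemma tsum_pow_sub_apply {A : X →L[𝕜] X} (hA : ‖A‖ < 1) (g : X) :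
    (∑' k, A ^ k) (g - A g) = g :=
  DFunLike.congr_fun (geom_series_mul_neg A hA) g

lemma tendsto_smul_tsum_pow_apply_zero {A : ι → X →L[𝕜] X} {A₀ : X →L[𝕜] X}
    (hA : Tendsto A l (𝓝 A₀)) (hA1 : ∀ᶠ i in l, ‖A i‖ < 1) {ε : ι → 𝕜} (hε : Tendsto ε l (𝓝 0))
    {K : ℝ} (hK : ∀ᶠ i in l, ‖ε i • ∑' k, A i ^ k‖ ≤ K) {f : ι → X} {f₀ : X}
    (hf : Tendsto f l (𝓝 f₀)) (hf₀ : f₀ ∈ closure (range fun g => g - A₀ g)) :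
    Tendsto (fun i => (ε i • ∑' k, A i ^ k) (f i)) l (𝓝 0) := by
  refine tendsto_apply_zero_of_mem_closure hK ?_ hf hf₀
  rintro _ ⟨g, rfl⟩
  have hAg : Tendsto (fun i => (A i - A₀) g) l (𝓝 0) := by
    simpa using (((ContinuousLinearMap.apply 𝕜 X g).continuous.tendsto A₀).comp hA).sub_const
      (A₀ g)
  have herror : Tendsto (fun i => (ε i • ∑' k, A i ^ k) ((A i - A₀) g)) l (𝓝 0) :=
    tendsto_apply_zero_of_mem_closure (S := {0}) hK (by simp [tendsto_const_nhds]) hAg (by simp)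
  have hmain : Tendsto (fun i => ε i • g) l (𝓝 0) := by simpa using hε.smul_const g
  refine (add_zero (0 : X) ▸ hmain.add herror).congr' ?_
  filter_upwards [hA1] with i hi
  have hsplit : g - A₀ g = (g - A i g) + (A i - A₀) g := by
    rw [sub_apply]; abel
  rw [hsplit, map_add, smul_apply _ _ (g - A i g), tsum_pow_sub_apply hi]

lemma tendsto_smul_tsum_pow_apply {A : ι → X →L[𝕜] X} {A₀ : X →L[𝕜] X}
    (hA : Tendsto A l (𝓝 A₀)) (hA1 : ∀ᶠ i in l, ‖A i‖ < 1) {ε : ι → 𝕜} (hε : Tendsto ε l (𝓝 0))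
    (hε0 : ∀ᶠ i in l, ε i ≠ 0) {K : ℝ} (hK : ∀ᶠ i in l, ‖ε i • ∑' k, A i ^ k‖ ≤ K) {u w f : X}
    (hu : Tendsto (fun i => (ε i)⁻¹ • (u - A i u)) l (𝓝 w))
    (hf : f - w ∈ closure (range fun g => g - A₀ g)) :
    Tendsto (fun i => (ε i • ∑' k, A i ^ k) f) l (𝓝 u) := by
  have hrest := tendsto_smul_tsum_pow_apply_zero hA hA1 hε hK
    (tendsto_const_nhds.sub hu : Tendsto (fun i => f - (ε i)⁻¹ • (u - A i u)) l _) hf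
  refine (zero_add u ▸ hrest.add_const u).congr' ?_
  filter_upwards [hA1, hε0] with i hi hi0
  rw [map_sub, map_smul, smul_apply, smul_apply, tsum_pow_sub_apply hi,
    inv_smul_smul₀ hi0, sub_add_cancel]

end NeumannSeries

section Abel

lemma summable_mul_pow_of_tendsto {u : ℕ → ℝ} {b r : ℝ} (hu : Tendsto u atTop (𝓝 b))
    (hr0 : 0 ≤ r) (hr1 : r < 1) : Summable fun k => u k * r ^ k :=
  summable_of_isBigO_nat (summable_geometric_of_lt_one hr0 hr1)
    (by simpa using (hu.isBigO_one ℝ).mul (Asymptotics.isBigO_refl (fun k => r ^ k) atTop))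

lemma tendsto_one_sub_mul_tsum_mul_pow {u : ℕ → ℝ} {b : ℝ} (hu : Tendsto u atTop (𝓝 b)) :
    Tendsto (fun r => (1 - r) * ∑' k, u k * r ^ k) (𝓝[<] 1) (𝓝 b) := by
  let d : ℕ → ℝ := fun k => u k - if k = 0 then 0 else u (k - 1)
  have hsum_d (n : ℕ) : ∑ k ∈ Finset.range (n + 1), d k = u n := by
    induction n with
    | zero => simp [d]
    | succ n ih => rw [Finset.sum_range_succ, ih]; simp [d]
  have hd : Tendsto (fun n => ∑ k ∈ Finset.range n, d k) atTop (𝓝 b) :=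
    (tendsto_add_atTop_iff_nat 1).1 (by simpa only [hsum_d] using hu)
  refine (tendsto_tsum_powerSeries_nhdsWithin_lt hd).congr' ?_
  filter_upwards [Ioo_mem_nhdsLT one_pos] with r ⟨hr0, hr1⟩
  have hS := summable_mul_pow_of_tendsto hu hr0.le hr1
  have hshift : HasSum (fun k => (if k = 0 then 0 else u (k - 1)) * r ^ k)
      (r * ∑' k, u k * r ^ k) := by
    rw [← hasSum_nat_add_iff' 1]
    simpa [pow_succ', mul_left_comm] using hS.hasSum.mul_left r
  rw [one_sub_mul, ← (hS.hasSum.sub hshift).tsum_eq]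
  exact tsum_congr fun k => sub_mul _ _ _

end Abel

section Words

variable {𝒜 : Type}

lemma shift_cons (q : 𝒜) (x : Omega 𝒜) : shift (cons q x) = x := rfl

lemma cons_head_shift (x : Omega 𝒜) : cons (x 0) (shift x) = x := by
  funext n
  cases n <;> rfl

lemma concat_zero (w : Fin 0 → 𝒜) (x : Omega 𝒜) : concat w x = x := by
  funext n
  simp [concat]

lemma concat_cons {k : ℕ} (q : 𝒜) (w : Fin k → 𝒜) (x : Omega 𝒜) :
    concat (Fin.cons q w : Fin (k + 1) → 𝒜) x = cons q (concat w x) := by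
  funext n
  cases n with
  | zero => simp [concat, cons]
  | succ n =>
    by_cases h : n < k
    · simpa [concat, cons, h] using Fin.cons_succ (α := fun _ => 𝒜) q w ⟨n, h⟩
    · simp [concat, cons, h]

lemma concat_mem_cyl {k : ℕ} {w v : Fin k → 𝒜} {x : Omega 𝒜} : concat v x ∈ cyl w ↔ v = w := by
  simp [cyl, concat, funext_iff]

lemma birkhoff_cons (f : Omega 𝒜 → ℝ) (k : ℕ) (q : 𝒜) (x : Omega 𝒜) :
    birkhoff f (k + 1) (cons q x) = f (cons q x) + birkhoff f k x := by
  simp only [birkhoff, Finset.sum_range_succ', Function.iterate_succ_apply, shift_cons,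
    Function.iterate_zero_apply, add_comm]

lemma sum_words_succ [Fintype 𝒜] {M : Type*} [AddCommMonoid M] {k : ℕ}
    (F : (Fin (k + 1) → 𝒜) → M) :
    ∑ w, F w = ∑ w : Fin k → 𝒜, ∑ q : 𝒜, F (Fin.cons q w : Fin (k + 1) → 𝒜) := by
  rw [← (Fin.consEquiv fun _ : Fin (k + 1) => 𝒜).sum_comp, Fintype.sum_prod_type,
    Finset.sum_comm]
  rfl

lemma concat_mem_cylinder {k : ℕ} (w : Fin k → 𝒜) (x y : Omega 𝒜) :
    concat w x ∈ PiNat.cylinder (concat w y) k :=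
  PiNat.mem_cylinder_iff.2 fun i hi => by simp [concat, hi]

lemma cons_mem_cylinder {k : ℕ} (q : 𝒜) {x y : Omega 𝒜} (h : x ∈ PiNat.cylinder y k) :
    cons q x ∈ PiNat.cylinder (cons q y) (k + 1) :=
  PiNat.mem_cylinder_iff.2 fun i hi => match i with
    | 0 => rfl
    | i + 1 => PiNat.mem_cylinder_iff.1 h i (by omega)

variable [TopologicalSpace 𝒜]

lemma continuous_cons (q : 𝒜) : Continuous (cons q) :=
  continuous_pi fun n => match n with
    | 0 => continuous_const
    | n + 1 => continuous_apply n

lemma continuous_shift : Continuous (shift (𝒜 := 𝒜)) :=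
  continuous_pi fun n => continuous_apply (n + 1)

lemma continuous_concat {k : ℕ} (w : Fin k → 𝒜) : Continuous (concat w) := by
  refine continuous_pi fun n => ?_
  by_cases h : n < k
  · simpa only [concat, h, dif_pos] using continuous_const
  · simpa only [concat, h, dif_neg, not_false_eq_true] using continuous_apply _

lemma continuous_birkhoff {f : Omega 𝒜 → ℝ} (hf : Continuous f) (k : ℕ) :
    Continuous (birkhoff f k) :=
  continuous_finsetSum _ fun j _ => hf.comp (continuous_shift.iterate j)

variable [DiscreteTopology 𝒜]

lemma isClopen_cyl {k : ℕ} (w : Fin k → 𝒜) : IsClopen (cyl w) := by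
  rw [cyl, Set.ofPred_forall]
  exact isClopen_iInter_of_finite fun i =>
    (isClopen_discrete {w i}).preimage (continuous_apply (i : ℕ))

lemma exists_forall_mem_cylinder_dist_lt [Finite 𝒜] {E : Type*} [PseudoMetricSpace E]
    {f : Omega 𝒜 → E} (hf : Continuous f) {ε : ℝ} (hε : 0 < ε) :
    ∃ n : ℕ, ∀ x y, x ∈ PiNat.cylinder y n → dist (f x) (f y) < ε := by
  let : MetricSpace (Omega 𝒜) := PiNat.metricSpace
  obtain ⟨δ, hδ, h⟩ := Metric.uniformContinuous_iff.1
    (CompactSpace.uniformContinuous_of_continuous hf) ε hε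
  obtain ⟨n, hn⟩ := exists_pow_lt_of_lt_one hδ one_half_lt_one
  exact ⟨n, fun x y hxy => h ((PiNat.mem_cylinder_iff_dist_le.1 hxy).trans_lt hn)⟩

end Words

section BoundedDistortion

variable {𝒜 : Type}

lemma dOmega_le_of_mem_cylinder {n : ℕ} {x y : Omega 𝒜} (h : x ∈ PiNat.cylinder y n) :
    dOmega x y ≤ (1 / 2 : ℝ) ^ n := by
  rw [dOmega]
  split_ifs with hxy
  · positivity
  · have hn : n ≤ sInf {k | x k ≠ y k} := le_csInf (Function.ne_iff.1 hxy) fun k hk =>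
      not_lt.1 fun hkn => hk (PiNat.mem_cylinder_iff.1 h k hkn)
    exact pow_le_pow_of_le_one (by norm_num) (by norm_num) (by omega)

lemma dOmega_nonneg (x y : Omega 𝒜) : 0 ≤ dOmega x y := by
  rw [dOmega]
  split_ifs <;> positivity

/-- The weight `exp (S_k f (wx))` of a word `w` of length `k` followed by the tail `x`. For
`f = log J` this is `JBirk J k w x`. -/
noncomputable def wordWeight (f : Omega 𝒜 → ℝ) {k : ℕ} (w : Fin k → 𝒜) (x : Omega 𝒜) : ℝ :=
  Real.exp (birkhoff f k (concat w x))

lemma wordWeight_pos (f : Omega 𝒜 → ℝ) {k : ℕ} (w : Fin k → 𝒜) (x : Omega 𝒜) :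
    0 < wordWeight f w x :=
  Real.exp_pos _

lemma continuous_wordWeight [TopologicalSpace 𝒜] {f : Omega 𝒜 → ℝ} (hf : Continuous f) {k : ℕ}
    (w : Fin k → 𝒜) : Continuous (wordWeight f w) :=
  Real.continuous_exp.comp ((continuous_birkhoff hf k).comp (continuous_concat w))

section Holder

variable {α : ℝ} {E : Type*} [NormedAddCommGroup E] {f : Omega 𝒜 → E}

lemma IsHolderW.exists_norm_sub_le (hα : 0 < α) (hf : IsHolderW α f) :
    ∃ C r : ℝ, 0 ≤ C ∧ r ∈ Ioo (0 : ℝ) 1 ∧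
      ∀ n x y, x ∈ PiNat.cylinder y n → ‖f x - f y‖ ≤ C * r ^ n := by
  obtain ⟨C, hC⟩ := hf
  refine ⟨|C|, (1 / 2) ^ α, abs_nonneg C, ⟨by positivity,
    rpow_lt_one (by norm_num) (by norm_num) hα⟩, fun n x y h => (hC x y).trans ?_⟩
  rw [Real.rpow_pow_comm (by norm_num)]
  exact mul_le_mul (le_abs_self C)
    (rpow_le_rpow (dOmega_nonneg x y) (dOmega_le_of_mem_cylinder h) hα.le)
    (rpow_nonneg (dOmega_nonneg x y) α) (abs_nonneg C)

lemma IsHolderW.continuous [TopologicalSpace 𝒜] [DiscreteTopology 𝒜] (hα : 0 < α)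
    (hf : IsHolderW α f) : Continuous f := by
  obtain ⟨C, r, -, hr, hC⟩ := hf.exists_norm_sub_le hα
  refine continuous_iff_continuousAt.2 fun y => Metric.continuousAt_iff'.2 fun ε hε => ?_
  have hlim : Tendsto (fun n : ℕ => C * r ^ n) atTop (𝓝 0) := by
    simpa using (tendsto_pow_atTop_nhds_zero_of_lt_one hr.1.le hr.2).const_mul C
  obtain ⟨n, hn⟩ := (hlim.eventually_lt_const hε).exists
  filter_upwards [(PiNat.isOpen_cylinder _ y n).mem_nhds (PiNat.self_mem_cylinder y n)] with x hx
  exact dist_eq_norm (f x) (f y) ▸ (hC n x y hx).trans_lt hn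

end Holder

/-- `f` has bounded distortion if its Birkhoff sums along the `k` letters of a word `w` depend on
the tail following `w` only up to an error that is uniform in `k` and `w`. For a continuous
potential this is Bowen's condition. -/
def HasBoundedDistortion (f : Omega 𝒜 → ℝ) : Prop :=
  ∃ D : ℝ, ∀ (k : ℕ) (w : Fin k → 𝒜) (x y : Omega 𝒜),
    birkhoff f k (concat w x) ≤ birkhoff f k (concat w y) + D

lemma IsHolderW.hasBoundedDistortion {α : ℝ} (hα : 0 < α) {f : Omega 𝒜 → ℝ}
    (hf : IsHolderW α f) : HasBoundedDistortion f := by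
  obtain ⟨C, r, hC0, hr, hC⟩ := hf.exists_norm_sub_le hα
  have hpartial : ∀ (k : ℕ) (w : Fin k → 𝒜) (x y : Omega 𝒜), birkhoff f k (concat w x) ≤
      birkhoff f k (concat w y) + C * ∑ i ∈ Finset.range (k + 1), r ^ i := by
    intro k
    induction k with
    | zero => simp [birkhoff, hC0]
    | succ k ih =>
      intro w x y
      rw [← Fin.cons_self_tail w, concat_cons, concat_cons, birkhoff_cons, birkhoff_cons,
        Finset.sum_range_succ, mul_add]
      have hhead := (le_abs_self _).trans
        (hC (k + 1) _ _ (cons_mem_cylinder (w 0) (concat_mem_cylinder (Fin.tail w) x y)))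
      linarith [ih (Fin.tail w) x y]
  have hgeom := summable_geometric_of_lt_one hr.1.le hr.2
  exact ⟨C * ∑' i, r ^ i, fun k w x y => (hpartial k w x y).trans
    (add_le_add_right (mul_le_mul_of_nonneg_left
      (hgeom.sum_le_tsum _ fun i _ => pow_nonneg hr.1.le i) hC0) _)⟩

end BoundedDistortion

section RuelleOperator

lemma exp_apply_continuousMap {X : Type*} [TopologicalSpace X] [CompactSpace X] (f : C(X, ℝ))
    (x : X) : NormedSpace.exp f x = Real.exp (f x) := by
  rw [Real.exp_eq_exp_ℝ]
  exact NormedSpace.map_exp (ContinuousMap.evalAlgHom ℝ ℝ x) (continuous_eval_const x) f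

variable {𝒜 : Type} [Fintype 𝒜] [TopologicalSpace 𝒜]
  {E : Type*} [NormedAddCommGroup E] [NormedSpace ℝ E]

/-- The transfer operator `φ ↦ (x ↦ ∑ q, W (qx) • φ (qx))` of the shift, as a bounded bilinear
function of the weight `W` and of the observable `φ`. -/
noncomputable def weightedTransfer :
    C(Omega 𝒜, ℝ) →L[ℝ] C(Omega 𝒜, E) →L[ℝ] C(Omega 𝒜, E) :=
  LinearMap.mkContinuous₂
    (LinearMap.mk₂ ℝ
      (fun W φ => ⟨fun x => ∑ q, W (cons q x) • φ (cons q x), continuous_finsetSum _ fun q _ =>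
        (W.continuous.smul φ.continuous).comp (continuous_cons q)⟩)
      (fun _ _ _ => by ext; simp [add_smul, Finset.sum_add_distrib])
      (fun _ _ _ => by ext; simp [mul_smul, Finset.smul_sum])
      (fun _ _ _ => by ext; simp [smul_add, Finset.sum_add_distrib])
      (fun c _ _ => by ext; simp [Finset.smul_sum, smul_comm _ c]))
    (Fintype.card 𝒜) fun W φ => by
      refine (ContinuousMap.norm_le _ (by positivity)).2 fun x => ?_
      refine (norm_sum_le _ _).trans ((Finset.sum_le_card_nsmul _ _ (‖W‖ * ‖φ‖)
        fun q _ => ?_).trans_eq (by simp [mul_assoc]))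
      rw [norm_smul]
      exact mul_le_mul (W.norm_coe_le_norm _) (φ.norm_coe_le_norm _) (norm_nonneg _)
        (norm_nonneg _)

lemma weightedTransfer_apply (W : C(Omega 𝒜, ℝ)) (φ : C(Omega 𝒜, E)) (x : Omega 𝒜) :
    weightedTransfer W φ x = ∑ q, W (cons q x) • φ (cons q x) := rfl

/-- The Ruelle operator of the potential `f`, as a bounded operator on `C(Omega 𝒜, E)`. Its weight
is the exponential of `f` in the Banach algebra `C(Omega 𝒜, ℝ)`. -/
noncomputable def ruelleCLM (f : C(Omega 𝒜, ℝ)) : C(Omega 𝒜, E) →L[ℝ] C(Omega 𝒜, E) :=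
  weightedTransfer (NormedSpace.exp f)

lemma coe_ruelleCLM (f : C(Omega 𝒜, ℝ)) (φ : C(Omega 𝒜, E)) :
    ⇑(ruelleCLM f φ) = ruelle f φ := by
  funext x
  simp only [ruelleCLM, weightedTransfer_apply, exp_apply_continuousMap, ruelle]

lemma ruelleCLM_pow_apply (f : C(Omega 𝒜, ℝ)) (k : ℕ) (φ : C(Omega 𝒜, E)) (x : Omega 𝒜) :
    (ruelleCLM f ^ k) φ x = ∑ w : Fin k → 𝒜, wordWeight f w x • φ (concat w x) := by
  simp only [wordWeight]
  induction k generalizing φ with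
  | zero => simp [birkhoff, concat_zero]
  | succ k ih =>
    rw [pow_succ, mul_apply_eq_comp, ih, sum_words_succ]
    simp only [coe_ruelleCLM, ruelle, Finset.smul_sum, smul_smul, concat_cons, birkhoff_cons,
      ← Real.exp_add, add_comm]

lemma hasDerivAt_ruelleCLM_smul_apply (f : C(Omega 𝒜, ℝ)) (φ : C(Omega 𝒜, E)) (s : ℝ) :
    HasDerivAt (fun t : ℝ => ruelleCLM (t • f) φ)
      (weightedTransfer (NormedSpace.exp (s • f) * f) φ) s :=
  ((weightedTransfer.flip φ).hasFDerivAt.comp_hasDerivAt s (hasDerivAt_exp_smul_const f s) :)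

lemma continuous_ruelleCLM_smul (f : C(Omega 𝒜, ℝ)) :
    Continuous fun s : ℝ => (ruelleCLM (s • f) : C(Omega 𝒜, E) →L[ℝ] C(Omega 𝒜, E)) :=
  weightedTransfer.continuous.comp
    (continuous_iff_continuousAt.2 fun s => (hasDerivAt_exp_smul_const f s).continuousAt)

end RuelleOperator

section NormalizedPotential

variable {𝒜 : Type} [Fintype 𝒜]

/-- A potential `g` is normalized if `exp g` is the transition probability of a `g`-function, that
is, if the Ruelle operator of `g` fixes the constants. -/
def IsNormalized (g : Omega 𝒜 → ℝ) : Prop :=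
  ∀ x, ∑ q, Real.exp (g (cons q x)) = 1

lemma IsNormalized.neg [Nontrivial 𝒜] {g : Omega 𝒜 → ℝ} (hg : IsNormalized g) (x : Omega 𝒜) :
    g x < 0 := by
  obtain ⟨q, hq⟩ := exists_ne (x 0)
  have h := Finset.single_lt_sum (f := fun q => Real.exp (g (cons q (shift x)))) hq
    (Finset.mem_univ _) (Finset.mem_univ _) (Real.exp_pos _) fun _ _ _ => (Real.exp_pos _).le
  rwa [hg, cons_head_shift, Real.exp_lt_one_iff] at h

variable [TopologicalSpace 𝒜] {E : Type*} [NormedAddCommGroup E] [NormedSpace ℝ E]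

lemma norm_ruelleCLM_le {f : C(Omega 𝒜, ℝ)} {b : ℝ} (hb : 0 ≤ b)
    (hf : ∀ x, ∑ q, Real.exp (f (cons q x)) ≤ b) :
    ‖(ruelleCLM f : C(Omega 𝒜, E) →L[ℝ] C(Omega 𝒜, E))‖ ≤ b := by
  refine ContinuousLinearMap.opNorm_le_bound _ hb fun φ => ?_
  refine (ContinuousMap.norm_le _ (by positivity)).2 fun x => ?_
  rw [coe_ruelleCLM, ruelle]
  refine (norm_sum_le _ _).trans ((Finset.sum_le_sum fun q _ => ?_).trans
    ((Finset.sum_mul _ _ _).symm.trans_le (mul_le_mul_of_nonneg_right (hf x) (norm_nonneg φ))))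
  rw [norm_smul, Real.norm_eq_abs, Real.abs_exp]
  exact mul_le_mul_of_nonneg_left (φ.norm_coe_le_norm _) (Real.exp_pos _).le

variable {g : C(Omega 𝒜, ℝ)}

lemma IsNormalized.exists_pos_forall_le_neg [Nontrivial 𝒜] (hg : IsNormalized g) :
    ∃ c > 0, ∀ x, g x ≤ -c := by
  obtain ⟨c, hc, h⟩ := isCompact_univ.exists_forall_le' (-g).continuous.continuousOn
    fun x _ => neg_pos.2 (hg.neg x)
  exact ⟨c, hc, fun x => le_neg.1 (h x (mem_univ x))⟩

lemma norm_ruelleCLM_smul_le (hg : IsNormalized g) {c : ℝ} (hc : ∀ x, g x ≤ -c) {s : ℝ}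
    (hs : 1 ≤ s) : ‖(ruelleCLM (s • g) : C(Omega 𝒜, E) →L[ℝ] C(Omega 𝒜, E))‖
      ≤ Real.exp (-(c * (s - 1))) := by
  refine norm_ruelleCLM_le (Real.exp_pos _).le fun x => ?_
  refine (Finset.sum_le_sum fun q _ => ?_).trans_eq
    (by rw [← Finset.mul_sum, hg x, mul_one] :
      ∑ q, Real.exp (-(c * (s - 1))) * Real.exp (g (cons q x)) = _)
  rw [← Real.exp_add, Real.exp_le_exp, ContinuousMap.smul_apply, smul_eq_mul]
  nlinarith [hc (cons q x)]

lemma ruelleCLM_const (hg : IsNormalized g) (v : E) :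
    ruelleCLM g (ContinuousMap.const (Omega 𝒜) v) = ContinuousMap.const (Omega 𝒜) v := by
  ext x
  simp only [coe_ruelleCLM, ruelle, ContinuousMap.const_apply, ← Finset.sum_smul, hg x, one_smul]

lemma ruelleCLM_pow_const (hg : IsNormalized g) (k : ℕ) (v : E) :
    (ruelleCLM g ^ k) (ContinuousMap.const (Omega 𝒜) v) = ContinuousMap.const (Omega 𝒜) v := by
  rw [FunLike.coe_pow_eq_iterate]
  exact Function.iterate_fixed (ruelleCLM_const hg v) k

lemma sum_wordWeight (hg : IsNormalized g) (k : ℕ) (x : Omega 𝒜) :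
    ∑ w : Fin k → 𝒜, wordWeight g w x = 1 := by
  have h := DFunLike.congr_fun (ruelleCLM_pow_const hg k (1 : ℝ)) x
  rw [ruelleCLM_pow_apply] at h
  simpa using h

end NormalizedPotential

section Mixing

/-- Both averages share the mass `e * p i` at each index; only the remaining mass `1 - e` sees the
full spread `d` of the values. -/
lemma norm_sum_smul_sub_sum_smul_le {ι E : Type*} [Fintype ι]
    [NormedAddCommGroup E] [NormedSpace ℝ E] {p q : ι → ℝ} {F G : ι → E}
    {e d η : ℝ} (hp : ∀ i, 0 ≤ p i) (hp1 : ∑ i, p i = 1) (hq1 : ∑ i, q i = 1) (he : 0 ≤ e)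
    (hpq : ∀ i, e * p i ≤ q i) (hd : ∀ i j, ‖F i - G j‖ ≤ d) (hη : ∀ i, ‖F i - G i‖ ≤ η) :
    ‖∑ i, p i • F i - ∑ i, q i • G i‖ ≤ (1 - e) * d + e * η := by
  have hmass : ∑ j, (q j - e * p j) = 1 - e := by
    rw [Finset.sum_sub_distrib, ← Finset.mul_sum, hp1, hq1, mul_one]
  have hrest (i) : ‖(1 - e) • F i - ∑ j, (q j - e * p j) • G j‖ ≤ (1 - e) * d := by
    rw [← hmass, Finset.sum_smul, Finset.sum_mul, ← Finset.sum_sub_distrib]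
    refine norm_sum_le_of_le _ fun j _ => ?_
    rw [← smul_sub, norm_smul, Real.norm_of_nonneg (sub_nonneg.2 (hpq j))]
    exact mul_le_mul_of_nonneg_left (hd i j) (sub_nonneg.2 (hpq j))
  have hsplit : ∑ i, p i • F i - ∑ i, q i • G i =
      ∑ i, p i • (((1 - e) • F i - ∑ j, (q j - e * p j) • G j) + e • (F i - G i)) := by
    have hcommon : ∑ j, (q j - e * p j) • G j = ∑ j, q j • G j - e • ∑ j, p j • G j := by
      simp only [sub_smul, mul_smul, Finset.sum_sub_distrib, Finset.smul_sum]
    have hterm (i) : p i • (((1 - e) • F i - ∑ j, (q j - e * p j) • G j) + e • (F i - G i)) =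
        p i • F i - p i • ∑ j, (q j - e * p j) • G j - e • p i • G i := by module
    rw [Finset.sum_congr rfl fun i _ => hterm i, Finset.sum_sub_distrib, Finset.sum_sub_distrib,
      ← Finset.sum_smul, hp1, ← Finset.smul_sum, hcommon]
    module
  rw [hsplit]
  refine (norm_sum_le_of_le _ fun i _ => ?_).trans_eq
    (by rw [← Finset.sum_mul, hp1, one_mul] : ∑ i, p i * ((1 - e) * d + e * η) = _)
  rw [norm_smul, Real.norm_of_nonneg (hp i)]
  refine mul_le_mul_of_nonneg_left ((norm_add_le _ _).trans (add_le_add (hrest i) ?_)) (hp i)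
  rw [norm_smul, Real.norm_of_nonneg he]
  exact mul_le_mul_of_nonneg_left (hη i) he

lemma HasBoundedDistortion.exists_forall_mul_wordWeight_le {𝒜 : Type} {f : Omega 𝒜 → ℝ}
    (hf : HasBoundedDistortion f) : ∃ e ∈ Ioc (0 : ℝ) 1,
      ∀ (k : ℕ) (w : Fin k → 𝒜) (x y : Omega 𝒜), e * wordWeight f w x ≤ wordWeight f w y := by
  obtain ⟨D, hD⟩ := hf
  refine ⟨Real.exp (-|D|), ⟨Real.exp_pos _, Real.exp_le_one_iff.2 (neg_nonpos.2 (abs_nonneg D))⟩,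
    fun k w x y => ?_⟩
  rw [wordWeight, wordWeight, ← Real.exp_add, Real.exp_le_exp]
  linarith [hD k w x y, le_abs_self D]

variable {𝒜 : Type} [Fintype 𝒜] [TopologicalSpace 𝒜] [DiscreteTopology 𝒜]
  {E : Type*} [NormedAddCommGroup E] [NormedSpace ℝ E] {g : C(Omega 𝒜, ℝ)}

lemma exists_dist_ruelleCLM_pow_le (hg : IsNormalized g) {e : ℝ} (he : 0 ≤ e)
    (hdist : ∀ (k : ℕ) (w : Fin k → 𝒜) (x y : Omega 𝒜), e * wordWeight g w x ≤ wordWeight g w y)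
    {φ : C(Omega 𝒜, E)} {d η : ℝ} (hφ : ∀ x y, dist (φ x) (φ y) ≤ d) (hη : 0 < η) :
    ∃ n : ℕ, ∀ x y, dist ((ruelleCLM g ^ n) φ x) ((ruelleCLM g ^ n) φ y) ≤
      (1 - e) * d + e * η := by
  obtain ⟨n, hn⟩ := exists_forall_mem_cylinder_dist_lt φ.continuous hη
  refine ⟨n, fun x y => ?_⟩
  rw [ruelleCLM_pow_apply, ruelleCLM_pow_apply, dist_eq_norm]
  refine norm_sum_smul_sub_sum_smul_le (fun w => (wordWeight_pos g w x).le)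
    (sum_wordWeight hg n x) (sum_wordWeight hg n y) he (fun w => hdist n w x y)
    (fun w v => ?_) fun w => ?_
  · exact dist_eq_norm (φ (concat w x)) _ ▸ hφ _ _
  · exact dist_eq_norm (φ (concat w x)) _ ▸ (hn _ _ (concat_mem_cylinder w x y)).le

lemma exists_forall_dist_ruelleCLM_pow_lt (hg : IsNormalized g) (hb : HasBoundedDistortion g)
    (φ : C(Omega 𝒜, E)) {ε : ℝ} (hε : 0 < ε) :
    ∃ n : ℕ, ∀ x y, dist ((ruelleCLM g ^ n) φ x) ((ruelleCLM g ^ n) φ y) < ε := by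
  obtain ⟨e, he, hdist⟩ := hb.exists_forall_mul_wordWeight_le
  have hcontract (m : ℕ) : ∃ n : ℕ, ∀ x y,
      dist ((ruelleCLM g ^ n) φ x) ((ruelleCLM g ^ n) φ y) ≤
        (1 - e) ^ m * (2 * ‖φ‖) + ε / 2 := by
    induction m with
    | zero => exact ⟨0, fun x y => by
        rw [pow_zero, pow_zero, one_mul, one_apply_eq_self]
        linarith [φ.dist_le_two_norm x y]⟩
    | succ m ih =>
      obtain ⟨n, hn⟩ := ih
      obtain ⟨k, hk⟩ := exists_dist_ruelleCLM_pow_le hg he.1.le hdist hn (half_pos hε)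
      refine ⟨k + n, fun x y => ?_⟩
      rw [pow_add, mul_apply_eq_comp]
      exact (hk x y).trans_eq (by ring)
  have hlim : Tendsto (fun m => (1 - e) ^ m * (2 * ‖φ‖) + ε / 2) atTop (𝓝 (ε / 2)) := by
    simpa using ((tendsto_pow_atTop_nhds_zero_of_lt_one (sub_nonneg.2 he.2)
      (sub_lt_self 1 he.1)).mul_const (2 * ‖φ‖)).add_const (ε / 2)
  obtain ⟨m, hm⟩ := (hlim.eventually_lt_const (half_lt_self hε)).exists
  obtain ⟨n, hn⟩ := hcontract m
  exact ⟨n, fun x y => (hn x y).trans_lt hm⟩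

end Mixing

section CompactIntegral

variable {X : Type*} [TopologicalSpace X] [CompactSpace X] [MeasurableSpace X]
  [OpensMeasurableSpace X] {E : Type*} [NormedAddCommGroup E]

lemma integrable_continuousMap (μ : Measure X) [IsFiniteMeasure μ] (φ : C(X, E)) :
    Integrable φ μ :=
  φ.continuous.integrable_of_hasCompactSupport (HasCompactSupport.of_compactSpace φ)

lemma norm_sub_integral_le [NormedSpace ℝ E] [CompleteSpace E] {μ : Measure X}
    [IsProbabilityMeasure μ] {φ : C(X, E)} {d : ℝ} (hφ : ∀ x y, dist (φ x) (φ y) ≤ d) (x : X) :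
    ‖φ x - ∫ y, φ y ∂μ‖ ≤ d := by
  have h : φ x - ∫ y, φ y ∂μ = ∫ y, (φ x - φ y) ∂μ := by
    rw [integral_sub (integrable_const _) (integrable_continuousMap μ φ), integral_const,
      probReal_univ, one_smul]
  simpa [h] using norm_integral_le_of_norm_le_const (μ := μ)
    (.of_forall fun y => (dist_eq_norm (φ x) (φ y)).symm.trans_le (hφ x y))

end CompactIntegral

section InvariantMeasure

variable {𝒜 : Type} [Fintype 𝒜] [TopologicalSpace 𝒜] [MeasurableSpace 𝒜]

/-- `μ` is fixed by the dual of the Ruelle operator of `g`. For normalized `g` this says that `μ` is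
a `g`-measure. -/
def IsDualFixed (g : C(Omega 𝒜, ℝ)) (μ : Measure (Omega 𝒜)) : Prop :=
  ∀ φ : C(Omega 𝒜, ℝ), ∫ x, ruelleCLM g φ x ∂μ = ∫ x, φ x ∂μ

variable {g : C(Omega 𝒜, ℝ)} {μ : Measure (Omega 𝒜)}

lemma IsDualFixed.integral_comp_shift (hμ : IsDualFixed g μ) (hg : IsNormalized g)
    (φ : C(Omega 𝒜, ℝ)) :
    ∫ x, φ (shift x) ∂μ = ∫ x, φ x ∂μ := by
  refine (hμ (φ.comp ⟨shift, continuous_shift⟩)).symm.trans ?_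
  simp [coe_ruelleCLM, ruelle, shift_cons, ← Finset.sum_mul, hg _]

variable [DiscreteTopology 𝒜] [BorelSpace 𝒜] {E : Type*} [NormedAddCommGroup E]
  [NormedSpace ℝ E] [CompleteSpace E]

lemma IsDualFixed.integral_ruelleCLM [IsFiniteMeasure μ] (hμ : IsDualFixed g μ)
    (φ : C(Omega 𝒜, E)) : ∫ x, ruelleCLM g φ x ∂μ = ∫ x, φ x ∂μ := by
  refine (SeparatingDual.eq_iff_forall_dual_eq (R := ℝ)).2 fun ℓ => ?_
  rw [← ℓ.integral_comp_comm (integrable_continuousMap μ _),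
    ← ℓ.integral_comp_comm (integrable_continuousMap μ _)]
  refine Eq.trans ?_ (hμ ((ℓ : C(E, ℝ)).comp φ))
  simp [coe_ruelleCLM, ruelle]

lemma IsDualFixed.integral_ruelleCLM_pow [IsFiniteMeasure μ] (hμ : IsDualFixed g μ) (k : ℕ)
    (φ : C(Omega 𝒜, E)) : ∫ x, (ruelleCLM g ^ k) φ x ∂μ = ∫ x, φ x ∂μ := by
  induction k with
  | zero => rfl
  | succ k ih => rw [pow_succ', mul_apply_eq_comp, hμ.integral_ruelleCLM, ih]

lemma mem_closure_range_sub_ruelleCLM [IsProbabilityMeasure μ] (hg : IsNormalized g)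
    (hb : HasBoundedDistortion g) (hμ : IsDualFixed g μ) {φ : C(Omega 𝒜, E)}
    (hφ : ∫ x, φ x ∂μ = 0) : φ ∈ closure (range fun ψ => ψ - ruelleCLM g ψ) := by
  refine Metric.mem_closure_range_iff.2 fun ε hε => ?_
  obtain ⟨n, hn⟩ := exists_forall_dist_ruelleCLM_pow_lt hg hb φ (half_pos hε)
  have htelescope : (∑ i ∈ Finset.range n, ruelleCLM g ^ i) φ -
      ruelleCLM g ((∑ i ∈ Finset.range n, ruelleCLM g ^ i) φ) = φ - (ruelleCLM g ^ n) φ :=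
    DFunLike.congr_fun (mul_neg_geom_sum (ruelleCLM g) n) φ
  have hsmall : ‖(ruelleCLM g ^ n) φ‖ ≤ ε / 2 := by
    refine (ContinuousMap.norm_le _ (half_pos hε).le).2 fun x => ?_
    have h := norm_sub_integral_le (μ := μ) (fun x y => (hn x y).le) x
    rwa [hμ.integral_ruelleCLM_pow, hφ, sub_zero] at h
  refine ⟨(∑ i ∈ Finset.range n, ruelleCLM g ^ i) φ, ?_⟩
  rw [htelescope, dist_eq_norm, sub_sub_cancel]
  exact hsmall.trans_lt (half_lt_self hε)

end InvariantMeasure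

section Resolvent

lemma le_add_inv_mul_one_sub_exp {c : ℝ} (hc : 0 < c) (t : ℝ) :
    t ≤ (t + c⁻¹) * (1 - Real.exp (-(c * t))) := by
  have h : (t + c⁻¹) * Real.exp (-(c * t)) ≤ c⁻¹ := calc
    (t + c⁻¹) * Real.exp (-(c * t)) = c⁻¹ * ((c * t + 1) * Real.exp (-(c * t))) := by field_simp
    _ ≤ c⁻¹ * (Real.exp (c * t) * Real.exp (-(c * t))) := by
      gcongr
      exact Real.add_one_le_exp _
    _ = c⁻¹ := by rw [← Real.exp_add, add_neg_cancel, Real.exp_zero, mul_one]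
  linarith

lemma exp_neg_mul_sub_one_lt_one {c s : ℝ} (hc : 0 < c) (hs : 1 < s) :
    Real.exp (-(c * (s - 1))) < 1 :=
  Real.exp_lt_one_iff.2 (neg_neg_of_pos (mul_pos hc (sub_pos.2 hs)))

variable {𝒜 : Type} [Fintype 𝒜] [TopologicalSpace 𝒜] {g : C(Omega 𝒜, ℝ)} {c s : ℝ}
  {E : Type*} [NormedAddCommGroup E] [NormedSpace ℝ E]

lemma norm_ruelleCLM_smul_lt_one (hg : IsNormalized g) (hc0 : 0 < c) (hc : ∀ x, g x ≤ -c)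
    (hs : 1 < s) : ‖(ruelleCLM (s • g) : C(Omega 𝒜, E) →L[ℝ] C(Omega 𝒜, E))‖ < 1 :=
  (norm_ruelleCLM_smul_le hg hc hs.le).trans_lt (exp_neg_mul_sub_one_lt_one hc0 hs)

lemma norm_smul_tsum_ruelleCLM_smul_pow_le (hg : IsNormalized g) (hc0 : 0 < c)
    (hc : ∀ x, g x ≤ -c) (hs : 1 < s) :
    ‖(s - 1) • ∑' k, (ruelleCLM (s • g) : C(Omega 𝒜, E) →L[ℝ] C(Omega 𝒜, E)) ^ k‖ ≤
      s - 1 + c⁻¹ := by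
  have hs0 := sub_pos.2 hs
  have hlt := norm_ruelleCLM_smul_lt_one (E := E) hg hc0 hc hs
  rw [norm_smul, Real.norm_of_nonneg hs0.le]
  refine (mul_le_mul_of_nonneg_left (norm_tsum_pow_le hlt) hs0.le).trans ?_
  rw [← div_eq_mul_inv, div_le_iff₀ (sub_pos.2 hlt)]
  refine (le_add_inv_mul_one_sub_exp hc0 _).trans ?_
  gcongr
  exact norm_ruelleCLM_smul_le hg hc hs.le

lemma tendsto_inv_smul_const_sub_ruelleCLM_smul (hg : IsNormalized g) (v : E) :
    Tendsto (fun s : ℝ => (s - 1)⁻¹ • (.const _ v - ruelleCLM (s • g) (.const _ v))) (𝓝[>] 1)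
      (𝓝 (ruelleCLM g (-g • .const _ v))) := by
  have hderiv : ruelleCLM g (-g • .const _ v) =
      -weightedTransfer (NormedSpace.exp ((1 : ℝ) • g) * g) (.const _ v) := by
    ext x
    simp [weightedTransfer_apply, ruelleCLM, mul_smul]
  rw [hderiv]
  refine ((hasDerivAt_ruelleCLM_smul_apply g _ 1).tendsto_slope.neg.mono_left
    (nhdsGT_le_nhdsNE 1)).congr fun s => ?_
  rw [slope_def_module, one_smul, ruelleCLM_const hg, ← smul_neg, neg_sub]

variable [DiscreteTopology 𝒜] [Nontrivial 𝒜] [MeasurableSpace 𝒜] [BorelSpace 𝒜]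
  {μ : Measure (Omega 𝒜)} [IsProbabilityMeasure μ]

lemma IsNormalized.integral_neg_pos (hg : IsNormalized g) : 0 < ∫ x, -g x ∂μ := by
  obtain ⟨c, hc0, hc⟩ := hg.exists_pos_forall_le_neg
  refine hc0.trans_le ?_
  simpa using integral_mono (μ := μ) (integrable_const c) (integrable_continuousMap μ (-g))
    fun x => le_neg.1 (hc x)

variable [CompleteSpace E]

theorem tendsto_smul_tsum_ruelleCLM_smul_pow (hg : IsNormalized g)
    (hb : HasBoundedDistortion g) (hμ : IsDualFixed g μ) (φ : C(Omega 𝒜, E)) :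
    Tendsto (fun s : ℝ => ((s - 1) • ∑' k, ruelleCLM (s • g) ^ k) φ) (𝓝[>] 1)
      (𝓝 (.const _ ((∫ x, -g x ∂μ)⁻¹ • ∫ x, φ x ∂μ))) := by
  obtain ⟨c, hc0, hc⟩ := hg.exists_pos_forall_le_neg
  have hA := (continuous_ruelleCLM_smul (E := E) g).tendsto 1
  rw [one_smul] at hA
  have hε : Tendsto (fun s : ℝ => s - 1) (𝓝[>] 1) (𝓝 0) :=
    (tendsto_sub_nhds_zero_iff.2 tendsto_id).mono_left nhdsWithin_le_nhds
  refine tendsto_smul_tsum_pow_apply (hA.mono_left nhdsWithin_le_nhds) ?_ hε ?_ (K := 1 + c⁻¹) ?_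
    (tendsto_inv_smul_const_sub_ruelleCLM_smul hg _)
    (mem_closure_range_sub_ruelleCLM hg hb hμ ?_)
  · filter_upwards [self_mem_nhdsWithin] with s hs using norm_ruelleCLM_smul_lt_one hg hc0 hc hs
  · filter_upwards [self_mem_nhdsWithin] with s hs using (sub_pos.2 hs).ne'
  · filter_upwards [Ioo_mem_nhdsGT one_lt_two] with s hs
    linarith [norm_smul_tsum_ruelleCLM_smul_pow_le (E := E) hg hc0 hc hs.1, hs.2]
  · simp only [ContinuousMap.sub_apply]
    rw [integral_sub (integrable_continuousMap μ _) (integrable_continuousMap μ _),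
      hμ.integral_ruelleCLM]
    simp only [ContinuousMap.smul_apply', ContinuousMap.neg_apply, ContinuousMap.const_apply]
    rw [integral_smul_const, smul_inv_smul₀ hg.integral_neg_pos.ne', sub_self]

end Resolvent

section Entropy

lemma negMulLog_integral_le {X : Type*} [MeasurableSpace X] {μ : Measure X}
    [IsProbabilityMeasure μ] {W : X → ℝ} (hW : Integrable W μ)
    (hW' : Integrable (fun x => Real.negMulLog (W x)) μ) (hpos : ∀ x, 0 < W x) {e : ℝ}
    (he : 0 < e) (heW : ∀ x y, e * W x ≤ W y) :
    Real.negMulLog (∫ x, W x ∂μ) ≤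
      ∫ x, Real.negMulLog (W x) ∂μ + (∫ x, W x ∂μ) * -Real.log e := by
  set p := ∫ x, W x ∂μ with hp
  have hlog (x) : Real.log e + Real.log (W x) ≤ Real.log p := by
    rw [← Real.log_mul he.ne' (hpos x).ne']
    refine Real.log_le_log (mul_pos he (hpos x)) ?_
    simpa using integral_mono (integrable_const (e * W x)) hW (heW x)
  calc Real.negMulLog p = ∫ x, W x * -Real.log p ∂μ := by
        rw [integral_mul_const, ← hp, Real.negMulLog, neg_mul_comm]
    _ ≤ ∫ x, (Real.negMulLog (W x) + W x * -Real.log e) ∂μ :=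
        integral_mono (hW.mul_const _) (hW'.add (hW.mul_const _)) fun x => by
          simp only [Real.negMulLog]
          linarith [mul_le_mul_of_nonneg_left (hlog x) (hpos x).le]
    _ = ∫ x, Real.negMulLog (W x) ∂μ + p * -Real.log e := by
        rw [integral_add hW' (hW.mul_const _), integral_mul_const]

variable {𝒜 : Type} [TopologicalSpace 𝒜] [DiscreteTopology 𝒜] [MeasurableSpace 𝒜] [BorelSpace 𝒜]
  {g : C(Omega 𝒜, ℝ)} {μ : Measure (Omega 𝒜)} [IsProbabilityMeasure μ]

lemma integrable_wordWeight [Finite 𝒜] {n : ℕ} (w : Fin n → 𝒜) : Integrable (wordWeight g w) μ :=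
  integrable_continuousMap μ ⟨_, continuous_wordWeight g.continuous w⟩

lemma integrable_negMulLog_wordWeight [Finite 𝒜] {n : ℕ} (w : Fin n → 𝒜) :
    Integrable (fun x => Real.negMulLog (wordWeight g w x)) μ :=
  integrable_continuousMap μ
    ⟨_, Real.continuous_negMulLog.comp (continuous_wordWeight g.continuous w)⟩

variable [Fintype 𝒜]

lemma integral_birkhoff (hg : IsNormalized g) (hμ : IsDualFixed g μ) (φ : C(Omega 𝒜, ℝ)) (n : ℕ) :
    ∫ x, birkhoff φ n x ∂μ = n * ∫ x, φ x ∂μ := by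
  induction n with
  | zero => simp [birkhoff]
  | succ n ih =>
    have hsucc (x) : birkhoff φ (n + 1) x = φ x + birkhoff φ n (shift x) := by
      simpa only [cons_head_shift] using birkhoff_cons φ n (x 0) (shift x)
    let S : C(Omega 𝒜, ℝ) := ⟨birkhoff φ n, continuous_birkhoff φ.continuous n⟩
    have hS : ∫ x, birkhoff φ n (shift x) ∂μ = n * ∫ x, φ x ∂μ :=
      (hμ.integral_comp_shift hg S).trans ih
    simp only [hsucc]
    have hint : Integrable (fun x => birkhoff φ n (shift x)) μ :=
      integrable_continuousMap μ (S.comp ⟨shift, continuous_shift⟩)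
    rw [integral_add (integrable_continuousMap μ φ) hint, hS]
    push_cast
    ring

lemma measureReal_cyl (hμ : IsDualFixed g μ) {n : ℕ} (w : Fin n → 𝒜) :
    μ.real (cyl w) = ∫ x, wordWeight g w x ∂μ := by
  let χ : C(Omega 𝒜, ℝ) :=
    ⟨(cyl w).indicator 1, continuous_one.indicator (by simp [(isClopen_cyl w).frontier_eq])⟩
  have hχ (x) : (ruelleCLM g ^ n) χ x = wordWeight g w x := by
    rw [ruelleCLM_pow_apply, Finset.sum_eq_single w] <;>
      simp +contextual [χ, concat_mem_cyl]
  rw [← integral_indicator_one (isClopen_cyl w).isOpen.measurableSet]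
  simp only [← hχ]
  exact (hμ.integral_ruelleCLM_pow n χ).symm

lemma sum_integral_wordWeight (hg : IsNormalized g) (n : ℕ) :
    ∑ w : Fin n → 𝒜, ∫ x, wordWeight g w x ∂μ = 1 := by
  rw [← integral_finsetSum _ fun w _ => integrable_wordWeight w]
  simp [sum_wordWeight hg]

lemma sum_integral_negMulLog_wordWeight (hg : IsNormalized g) (hμ : IsDualFixed g μ) (n : ℕ) :
    ∑ w : Fin n → 𝒜, ∫ x, Real.negMulLog (wordWeight g w x) ∂μ = n * ∫ x, -g x ∂μ := by
  let S : C(Omega 𝒜, ℝ) := ⟨birkhoff (-g) n, continuous_birkhoff (-g).continuous n⟩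
  have hS (x) : ∑ w : Fin n → 𝒜, Real.negMulLog (wordWeight g w x) = (ruelleCLM g ^ n) S x := by
    rw [ruelleCLM_pow_apply]
    simp [S, wordWeight, Real.negMulLog, birkhoff]
  rw [← integral_finsetSum _ fun w _ => integrable_negMulLog_wordWeight w]
  simp only [hS]
  rw [hμ.integral_ruelleCLM_pow]
  exact integral_birkhoff hg hμ (-g) n

lemma mul_integral_neg_le_blockEntropy (hg : IsNormalized g) (hμ : IsDualFixed g μ) (n : ℕ) :
    n * ∫ x, -g x ∂μ ≤ blockEntropy μ n := by
  rw [← sum_integral_negMulLog_wordWeight hg hμ, blockEntropy]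
  refine Finset.sum_le_sum fun w _ => ?_
  rw [← measureReal_def, measureReal_cyl hμ]
  exact Real.concaveOn_negMulLog.le_map_integral Real.continuous_negMulLog.continuousOn isClosed_Ici
    (.of_forall fun x => (wordWeight_pos g w x).le) (integrable_wordWeight w)
    (integrable_negMulLog_wordWeight w)

lemma exists_blockEntropy_le (hg : IsNormalized g) (hb : HasBoundedDistortion g)
    (hμ : IsDualFixed g μ) : ∃ D, ∀ n : ℕ, blockEntropy μ n ≤ n * ∫ x, -g x ∂μ + D := by
  obtain ⟨e, he, hdist⟩ := hb.exists_forall_mul_wordWeight_le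
  refine ⟨-Real.log e, fun n => ?_⟩
  rw [← sum_integral_negMulLog_wordWeight hg hμ, ← one_mul (-Real.log e),
    ← sum_integral_wordWeight (μ := μ) hg n, Finset.sum_mul, ← Finset.sum_add_distrib, blockEntropy]
  refine Finset.sum_le_sum fun w _ => ?_
  rw [← measureReal_def, measureReal_cyl hμ]
  exact negMulLog_integral_le (integrable_wordWeight w) (integrable_negMulLog_wordWeight w)
    (wordWeight_pos g w) he.1 (hdist n w)

theorem KSentropy_eq_integral_neg (hg : IsNormalized g) (hb : HasBoundedDistortion g)
    (hμ : IsDualFixed g μ) : KSentropy μ = ∫ x, -g x ∂μ := by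
  obtain ⟨D, hD⟩ := exists_blockEntropy_le hg hb hμ
  have hlow (n : ℕ) : ∫ x, -g x ∂μ ≤ blockEntropy μ (n + 1) / (n + 1) := by
    rw [le_div_iff₀' (by positivity)]
    exact_mod_cast mul_integral_neg_le_blockEntropy hg hμ (n + 1)
  have hupp (n : ℕ) : KSentropy μ ≤ ∫ x, -g x ∂μ + D * (1 / ((n : ℝ) + 1)) := by
    refine (ciInf_le ⟨_, forall_mem_range.2 hlow⟩ n).trans ?_
    rw [mul_one_div, ← sub_le_iff_le_add, ← sub_div, div_le_iff₀' (by positivity),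
      sub_le_iff_le_add]
    exact_mod_cast hD (n + 1)
  have hlim : Tendsto (fun n : ℕ => ∫ x, -g x ∂μ + D * (1 / ((n : ℝ) + 1))) atTop
      (𝓝 (∫ x, -g x ∂μ)) := by
    simpa using (tendsto_one_div_add_atTop_nhds_zero_nat.const_mul D).const_add (∫ x, -g x ∂μ)
  exact le_antisymm (ge_of_tendsto' hlim hupp) (le_ciInf hlow)

end Entropy

section Zeta

lemma hasSum_pow_succ_apply_eval {𝕜 X E : Type*} [NontriviallyNormedField 𝕜] [TopologicalSpace X]
    [CompactSpace X] [NormedAddCommGroup E] [NormedSpace 𝕜 E] [CompleteSpace E]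
    {A : C(X, E) →L[𝕜] C(X, E)} (hA : ‖A‖ < 1) (φ : C(X, E)) (x : X) :
    HasSum (fun k => (A ^ (k + 1)) φ x) ((∑' k, A ^ k) φ x - φ x) := by
  have h := ((summable_geometric_of_norm_lt_one hA).hasSum.mapL
    ((ContinuousMap.evalCLM 𝕜 x).comp (ContinuousLinearMap.apply 𝕜 _ φ)))
  simpa using (hasSum_nat_add_iff' 1).2 h

lemma tendsto_smul_tsum_zero_of_norm_le {E : Type*} [NormedAddCommGroup E] [NormedSpace ℝ E]
    {u : ℕ → ℝ} (hu : Tendsto u atTop (𝓝 0)) {c : ℝ} (hc : 0 < c) {b : ℝ → ℕ → E}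
    (hb : ∀ s > 1, ∀ k, ‖b s k‖ ≤ u k * Real.exp (-(c * (s - 1))) ^ k) :
    Tendsto (fun s => (s - 1) • ∑' k, b s k) (𝓝[>] 1) (𝓝 0) := by
  have hs : Tendsto (fun s : ℝ => s - 1) (𝓝[>] 1) (𝓝 0) :=
    (tendsto_sub_nhds_zero_iff.2 tendsto_id).mono_left nhdsWithin_le_nhds
  have hρ : Tendsto (fun s : ℝ => Real.exp (-(c * (s - 1)))) (𝓝[>] 1) (𝓝[<] 1) := by
    refine tendsto_nhdsWithin_iff.2 ⟨?_, ?_⟩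
    · simpa using (hs.const_mul c).neg.rexp
    · filter_upwards [self_mem_nhdsWithin] with s hs using exp_neg_mul_sub_one_lt_one hc hs
  have hlim := (hs.add_const c⁻¹).mul ((tendsto_one_sub_mul_tsum_mul_pow hu).comp hρ)
  rw [mul_zero] at hlim
  refine squeeze_zero_norm' ?_ hlim
  filter_upwards [self_mem_nhdsWithin] with s hs
  have hs0 := (sub_pos.2 (mem_Ioi.1 hs)).le
  have hsum := (summable_mul_pow_of_tendsto hu (Real.exp_pos _).le
    (exp_neg_mul_sub_one_lt_one hc hs)).hasSum
  have hD := tsum_of_norm_bounded hsum (hb s hs)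
  rw [norm_smul, Real.norm_of_nonneg hs0, Function.comp_apply, ← mul_assoc]
  exact mul_le_mul (le_add_inv_mul_one_sub_exp hc _) hD (norm_nonneg _)
    (hs0.trans (le_add_inv_mul_one_sub_exp hc _))

variable {𝒜 : Type}

lemma wordWeight_smul (s : ℝ) (f : Omega 𝒜 → ℝ) {k : ℕ} (w : Fin k → 𝒜) (x : Omega 𝒜) :
    wordWeight (s • f) w x = wordWeight f w x ^ s := by
  rw [wordWeight, wordWeight, ← Real.exp_mul, mul_comm]
  simp only [birkhoff, Pi.smul_apply, smul_eq_mul, Finset.mul_sum]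

variable [Fintype 𝒜] [TopologicalSpace 𝒜]

lemma sum_wordWeight_smul_le {g : C(Omega 𝒜, ℝ)} (hg : IsNormalized g) {c : ℝ}
    (hc : ∀ x, g x ≤ -c) {s : ℝ} (hs : 1 ≤ s) (k : ℕ) (x : Omega 𝒜) :
    ∑ w : Fin k → 𝒜, wordWeight (s • g) w x ≤ Real.exp (-(c * (s - 1))) ^ k := by
  have : Nonempty (Omega 𝒜) := ⟨x⟩
  let A : C(Omega 𝒜, ℝ) →L[ℝ] C(Omega 𝒜, ℝ) := ruelleCLM (s • g)
  have hone : ‖ContinuousMap.const (Omega 𝒜) (1 : ℝ)‖ ≤ 1 :=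
    (ContinuousMap.norm_le _ zero_le_one).2 fun _ => norm_one.le
  calc ∑ w : Fin k → 𝒜, wordWeight (s • g) w x = (A ^ k) (.const _ 1) x := by
        rw [ruelleCLM_pow_apply]
        simp
    _ ≤ ‖(A ^ k) (.const _ 1)‖ :=
        (Real.le_norm_self _).trans (ContinuousMap.norm_coe_le_norm _ x)
    _ ≤ ‖A ^ k‖ := (A ^ k).unit_le_opNorm _ hone
    _ ≤ Real.exp (-(c * (s - 1))) ^ k := (norm_pow_le A k).trans
        (pow_le_pow_left₀ (norm_nonneg A) (norm_ruelleCLM_smul_le hg hc hs) k)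

variable [DiscreteTopology 𝒜] {E : Type*} [NormedAddCommGroup E]

lemma tendsto_norm_concat_sub_concat (φ : C(Omega 𝒜, E)) (x y : Omega 𝒜) :
    Tendsto (fun k => ‖fun w : Fin k → 𝒜 => φ (concat w x) - φ (concat w y)‖) atTop (𝓝 0) := by
  refine Metric.tendsto_atTop.2 fun ε hε => ?_
  obtain ⟨n, hn⟩ := exists_forall_mem_cylinder_dist_lt φ.continuous hε
  refine ⟨n, fun k hk => ?_⟩
  rw [dist_zero_right, norm_norm, pi_norm_lt_iff hε]
  exact fun w => dist_eq_norm (φ (concat w x)) _ ▸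
    hn _ _ (PiNat.cylinder_anti _ hk (concat_mem_cylinder w x y))

end Zeta

section GMeasure

variable {𝒜 : Type} [Fintype 𝒜] [TopologicalSpace 𝒜] {J : Omega 𝒜 → ℝ}

/-- The continuous potential `log J` of a `g`-function `J`. -/
noncomputable def IsGFunction.potential (hJ : IsGFunction J) : C(Omega 𝒜, ℝ) :=
  ⟨fun z => Real.log (J z), hJ.1.log fun x => (hJ.2.1 x).ne'⟩

lemma IsGFunction.isNormalized (hJ : IsGFunction J) : IsNormalized hJ.potential := fun x => by
  simpa only [IsGFunction.potential, ContinuousMap.coe_mk, Real.exp_log (hJ.2.1 _)] using hJ.2.2 x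

lemma JBirk_rpow (hJ : IsGFunction J) {k : ℕ} (w : Fin k → 𝒜) (x : Omega 𝒜) (s : ℝ) :
    JBirk J k w x ^ s = wordWeight (s • ⇑hJ.potential) w x :=
  (wordWeight_smul s _ w x).symm

lemma IsGMeasure.isDualFixed [MeasurableSpace 𝒜] {μ : Measure (Omega 𝒜)} (hμ : IsGMeasure J μ)
    (hJ : IsGFunction J) : IsDualFixed hJ.potential μ := by
  intro φ
  have h := hμ.2 (fun x => (φ x : ℂ)) (Complex.continuous_ofReal.comp φ.continuous)
  have hreal (x) : ruelle (fun z => Real.log (J z)) (fun x => (φ x : ℂ)) x =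
      (ruelleCLM hJ.potential φ x : ℂ) := by
    simp [coe_ruelleCLM, ruelle, IsGFunction.potential]
  simp only [hreal] at h
  exact_mod_cast h

lemma hasSum_zetaPlus (hJ : IsGFunction J) (a : C(Omega 𝒜, ℂ)) (x : Omega 𝒜) {s : ℝ}
    (hs : ‖(ruelleCLM (s • hJ.potential) : C(Omega 𝒜, ℂ) →L[ℝ] C(Omega 𝒜, ℂ))‖ < 1) :
    HasSum (fun k => ∑ w : Fin (k + 1) → 𝒜, a (concat w x) * ((JBirk J (k + 1) w x ^ s : ℝ) : ℂ))
      ((∑' k, ruelleCLM (s • hJ.potential) ^ k) a x - a x) := by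
  have h := hasSum_pow_succ_apply_eval hs a x
  simp only [ruelleCLM_pow_apply, Complex.real_smul, ContinuousMap.coe_smul] at h
  simpa only [JBirk_rpow hJ, mul_comm (a _)] using h

lemma norm_sum_mul_JBirk_rpow_le (hJ : IsGFunction J) {c : ℝ} (hc0 : 0 < c)
    (hc : ∀ x, hJ.potential x ≤ -c) {s : ℝ} (hs : 1 < s) (x : Omega 𝒜) {k : ℕ}
    (b : (Fin (k + 1) → 𝒜) → ℂ) :
    ‖∑ w, b w * ((JBirk J (k + 1) w x ^ s : ℝ) : ℂ)‖ ≤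
      ‖b‖ * Real.exp (-(c * (s - 1))) ^ k := by
  calc ‖∑ w, b w * ((JBirk J (k + 1) w x ^ s : ℝ) : ℂ)‖
      ≤ ∑ w, ‖b‖ * wordWeight (s • ⇑hJ.potential) w x := norm_sum_le_of_le _ fun w _ => by
        rw [norm_mul, JBirk_rpow hJ, Complex.norm_of_nonneg (wordWeight_pos _ w x).le]
        exact mul_le_mul_of_nonneg_right (norm_le_pi_norm b w) (wordWeight_pos _ w x).le
    _ ≤ ‖b‖ * Real.exp (-(c * (s - 1))) ^ (k + 1) := by
        rw [← Finset.mul_sum]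
        gcongr
        exact sum_wordWeight_smul_le hJ.isNormalized hc hs.le _ x
    _ ≤ ‖b‖ * Real.exp (-(c * (s - 1))) ^ k :=
        mul_le_mul_of_nonneg_left (pow_le_pow_of_le_one (Real.exp_pos _).le
          (exp_neg_mul_sub_one_lt_one hc0 hs).le k.le_succ) (norm_nonneg b)

end GMeasure

section ZetaLimits

variable {𝒜 : Type} [Fintype 𝒜] [TopologicalSpace 𝒜] [DiscreteTopology 𝒜] [Nontrivial 𝒜]
  {J : Omega 𝒜 → ℝ}

lemma tendsto_sub_one_mul_zetaPlus [MeasurableSpace 𝒜] [BorelSpace 𝒜] (hJ : IsGFunction J)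
    (hb : HasBoundedDistortion fun z => Real.log (J z)) {μ : Measure (Omega 𝒜)}
    (hμ : IsGMeasure J μ) (a : C(Omega 𝒜, ℂ)) (x : Omega 𝒜) :
    Tendsto (fun s : ℝ => ((s : ℂ) - 1) * zetaPlus J a x s) (𝓝[>] (1 : ℝ))
      (𝓝 ((((KSentropy μ)⁻¹ : ℝ) : ℂ) * ∫ z, a z ∂μ)) := by
  have := hμ.1
  obtain ⟨c, hc0, hc⟩ := hJ.isNormalized.exists_pos_forall_le_neg
  have hresolvent := ((continuous_eval_const x).tendsto _).comp
    (tendsto_smul_tsum_ruelleCLM_smul_pow hJ.isNormalized hb (hμ.isDualFixed hJ) a)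
  have hzero : Tendsto (fun s : ℝ => (s - 1) • a x) (𝓝[>] 1) (𝓝 0) := by
    have h : Continuous fun s : ℝ => (s - 1) • a x := by fun_prop
    simpa using (h.tendsto 1).mono_left nhdsWithin_le_nhds
  have h := hresolvent.sub hzero
  rw [← KSentropy_eq_integral_neg hJ.isNormalized hb (hμ.isDualFixed hJ), sub_zero,
    ContinuousMap.const_apply, Complex.real_smul] at h
  refine h.congr' ?_
  filter_upwards [self_mem_nhdsWithin] with s hs
  rw [zetaPlus, (hasSum_zetaPlus hJ a x
    (norm_ruelleCLM_smul_lt_one hJ.isNormalized hc0 hc hs)).tsum_eq]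
  simp [mul_sub]

lemma tendsto_sub_one_mul_zetaMinus_sub_zetaPlus (hJ : IsGFunction J) (a : C(Omega 𝒜, ℂ))
    (x y : Omega 𝒜) :
    Tendsto (fun s : ℝ => ((s : ℂ) - 1) * (zetaMinus J a x y s - zetaPlus J a x s)) (𝓝[>] (1 : ℝ))
      (𝓝 0) := by
  obtain ⟨c, hc0, hc⟩ := hJ.isNormalized.exists_pos_forall_le_neg
  have hu := (tendsto_norm_concat_sub_concat a y x).comp (tendsto_add_atTop_nat 1)
  have hbound (s : ℝ) (hs : s > 1) (k : ℕ) := norm_sum_mul_JBirk_rpow_le hJ hc0 hc hs x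
    fun w : Fin (k + 1) → 𝒜 => a (concat w y) - a (concat w x)
  refine (tendsto_smul_tsum_zero_of_norm_le hu hc0 hbound).congr' ?_
  filter_upwards [self_mem_nhdsWithin] with s hs
  have hdiff := (Summable.of_norm_bounded (summable_mul_pow_of_tendsto hu (Real.exp_pos _).le
    (exp_neg_mul_sub_one_lt_one hc0 hs)) (hbound s hs)).hasSum
  have hplus := hasSum_zetaPlus hJ a x (norm_ruelleCLM_smul_lt_one hJ.isNormalized hc0 hc hs)
  have hminus := (hdiff.add hplus).tsum_eq
  simp only [← Finset.sum_add_distrib, ← add_mul, sub_add_cancel] at hminus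
  rw [zetaMinus, zetaPlus, hminus, hplus.tsum_eq]
  simp

end ZetaLimits

theorem statement2_general {𝒜 : Type} [Fintype 𝒜] [TopologicalSpace 𝒜] [DiscreteTopology 𝒜]
    [MeasurableSpace 𝒜] [BorelSpace 𝒜] [Nontrivial 𝒜] (J : Omega 𝒜 → ℝ) (hJ : IsGFunction J)
    (hbJ : HasBoundedDistortion fun z => Real.log (J z)) (μ : Measure (Omega 𝒜))
    (hμ : IsGMeasure J μ) (a : Omega 𝒜 → ℂ) (ha : Continuous a) (x y : Omega 𝒜) :
    Tendsto (fun s : ℝ => ((s : ℂ) - 1) * zetaPlus J a x s) (𝓝[>] (1 : ℝ))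
        (𝓝 ((((KSentropy μ)⁻¹ : ℝ) : ℂ) * ∫ z, a z ∂μ)) ∧
      Tendsto (fun s : ℝ => ((s : ℂ) - 1) * zetaMinus J a x y s) (𝓝[>] (1 : ℝ))
        (𝓝 ((((KSentropy μ)⁻¹ : ℝ) : ℂ) * ∫ z, a z ∂μ)) := by
  have hplus := tendsto_sub_one_mul_zetaPlus hJ hbJ hμ ⟨a, ha⟩ x
  refine ⟨hplus, ?_⟩
  simpa [← mul_add] using hplus.add (tendsto_sub_one_mul_zetaMinus_sub_zetaPlus hJ ⟨a, ha⟩ x y)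

/-- Corollary `cor-igualdade-zetamenos-zetamais` of the paper.
For `log J` an `α`-Hölder `g`-function with unique `g`-measure `μ`, `a` α-Hölder and
`x, y ∈ Ω` fixed, `lim_{s→1⁺}(s−1)ζ₊(s) = lim_{s→1⁺}(s−1)ζ₋(s)`, and both limits equal
`(1/h_μ(σ)) ∫ a dμ`. -/
theorem statement2 {𝒜 : Type} [Fintype 𝒜] [TopologicalSpace 𝒜] [DiscreteTopology 𝒜]
    [MeasurableSpace 𝒜] [BorelSpace 𝒜] (hcard : 2 ≤ Fintype.card 𝒜)
    (α : ℝ) (hα : α ∈ Set.Ioo (0 : ℝ) 1)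
    (J : Omega 𝒜 → ℝ) (hJ : IsGFunction J)
    (hHolJ : IsHolderW α (fun z => Real.log (J z)))
    (μ : Measure (Omega 𝒜)) (hμ : IsGMeasure J μ)
    (huniq : ∀ ν : Measure (Omega 𝒜), IsGMeasure J ν → ν = μ)
    (a : Omega 𝒜 → ℂ) (ha : IsHolderW α a) (x y : Omega 𝒜) :
    Tendsto (fun s : ℝ => ((s : ℂ) - 1) * zetaPlus J a x s) (𝓝[>] (1 : ℝ))
        (𝓝 ((((KSentropy μ)⁻¹ : ℝ) : ℂ) * ∫ z, a z ∂μ)) ∧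
      Tendsto (fun s : ℝ => ((s : ℂ) - 1) * zetaMinus J a x y s) (𝓝[>] (1 : ℝ))
        (𝓝 ((((KSentropy μ)⁻¹ : ℝ) : ℂ) * ∫ z, a z ∂μ)) := by
  have := Fintype.one_lt_card_iff_nontrivial.1 hcard
  exact statement2_general J hJ (hHolJ.hasBoundedDistortion hα.1) μ hμ a (ha.continuous hα.1) x y

end GS
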